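/- Let k ≥ 0 and let g : ℂ × ℂ × ℝ^k → ℝ be smooth (C^∞). For ε ∈ ℝ define φ_ε(z₀, z₁, x) = g(z₀, z₁, x) − log|z₀z₁ + ε|² on the open set where z₀z₁ + ε ≠ 0. Fix x₀ ∈ ℝ^k, set p = (0, 0, x₀), and assume: (i) the Fréchet derivative of x ↦ g(0, 0, x) vanishes at x₀, and (ii) the Hessian of x ↦ g(0, 0, x) at x₀ is nondegenerate; let m denote the maximal dimension of a subspace of ℝ^k on which the quadratic form of this Hessian is negative definite. Then there exist ε₁ > 0 and an open neighborhood U of p such that for every 0 < ε < ε₁, φ_ε has a unique critical point p_ε in U, the second derivative of φ_ε at p_ε is a nondegenerate bilinear form on ℂ × ℂ × ℝ^k ≅ ℝ^{4+k}, and the maximal dimension of a subspace on which the quadratic form v ↦ D²φ_ε(p_ε)(v, v) is negative definite equals m + 2. -/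

import Mathlib

open Filter Topology

/-- The set of dimensions of subspaces of `V` on which the quadratic form of the bilinear
form `B` is negative definite.  Its greatest element is the Morse index of `B`. -/
def negDefiniteDims (V : Type*) [NormedAddCommGroup V] [NormedSpace ℝ V]
    (B : V →L[ℝ] V →L[ℝ] ℝ) : Set ℕ :=
  {d | ∃ W : Submodule ℝ V, Module.finrank ℝ W = d ∧ ∀ v ∈ W, v ≠ 0 → B v v < 0}

/-!
A square root `t` of `ε` turns `z₀ z₁ + ε` into `ε (ζ₀ ζ₁ + 1)` for `zᵢ = t ζᵢ`. Up to a constant,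
`φ_ε` thus becomes `g (t ζ₀, t ζ₁, x) - log |ζ₀ ζ₁ + 1|²`, which is regular near the origin even
for `t = 0`. There the variables separate: `-log |ζ₀ ζ₁ + 1|²` has Hessian `-2 Re (2 u v)` at the
origin, of index `2`, which adds to the index `m` of `x ↦ g (0, 0, x)`. A nondegenerate critical
point persists, with its index, under small perturbations.

This controls the critical points of `φ_ε` only for `z` of order `t`. But at a critical point with
`|z₀|, |z₁| ≤ r` the equations `∂φ_ε = 0` give `2 |zᵢ| ≤ ‖Dg‖ |z₀ z₁ + ε|`, hence `|zᵢ| ≤ M |ε|`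
if `‖Dg‖ ≤ M` and `M r ≤ 1`. So all critical points near `(0, 0, x₀)` satisfy
`|ζᵢ| ≤ M |t|` and lie in the region where the rescaled function has exactly one.
-/

lemma finrank_graph {K E F : Type*} [Field K] [AddCommGroup E] [Module K E] [AddCommGroup F]
    [Module K F] (L : E →ₗ[K] F) : Module.finrank K L.graph = Module.finrank K E := by
  rw [L.graph_eq_range_prod]
  exact LinearMap.finrank_range_of_inj fun _ _ huv => congr_arg Prod.fst huv

lemma finrank_submodule_prod {K V V' : Type*} [Field K] [AddCommGroup V] [Module K V]
    [AddCommGroup V'] [Module K V'] [FiniteDimensional K V] [FiniteDimensional K V']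
    (N : Submodule K V) (N' : Submodule K V') :
    Module.finrank K (N.prod N') = Module.finrank K N + Module.finrank K N' := by
  have h := LinearMap.finrank_range_of_inj (f := N.subtype.prodMap N'.subtype)
    (N.injective_subtype.prodMap N'.injective_subtype)
  rwa [LinearMap.range_prodMap, N.range_subtype, N'.range_subtype, Module.finrank_prod] at h

lemma forall_mem_prod_pos {R V V' : Type*} [Semiring R] [AddCommMonoid V] [Module R V]
    [AddCommMonoid V'] [Module R V'] {P : Submodule R V} {P' : Submodule R V'} {q : V → ℝ}
    {q' : V' → ℝ} (hq₀ : q 0 = 0) (hq₀' : q' 0 = 0) (hq : ∀ v ∈ P, v ≠ 0 → 0 < q v)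
    (hq' : ∀ v ∈ P', v ≠ 0 → 0 < q' v) : ∀ v ∈ P.prod P', v ≠ 0 → 0 < q v.1 + q' v.2 := by
  rintro ⟨v, v'⟩ ⟨hv, hv'⟩ hne
  rcases eq_or_ne v 0 with rfl | hv₀ <;> rcases eq_or_ne v' 0 with rfl | hv₀'
  · exact (hne rfl).elim
  · simpa [hq₀] using hq' v' hv' hv₀'
  · simpa [hq₀'] using hq v hv hv₀
  · exact add_pos (hq v hv hv₀) (hq' v' hv' hv₀')

section MorseIndex

variable {V V' : Type*} [NormedAddCommGroup V] [NormedSpace ℝ V] [NormedAddCommGroup V']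
  [NormedSpace ℝ V'] {B : V →L[ℝ] V →L[ℝ] ℝ} {B' : V' →L[ℝ] V' →L[ℝ] ℝ} {m m' : ℕ}

/-- `B` is a nondegenerate bilinear form of Morse index `m`. -/
def HasMorseIndex (B : V →L[ℝ] V →L[ℝ] ℝ) (m : ℕ) : Prop :=
  (∀ v, v ≠ 0 → B v ≠ 0) ∧ IsGreatest (negDefiniteDims V B) m

/-- The quadratic form `v ↦ B v v`, through which Mathlib's theory of signatures is applied. -/
noncomputable def diagonalForm (B : V →L[ℝ] V →L[ℝ] ℝ) : QuadraticForm ℝ V :=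
  LinearMap.BilinMap.toQuadraticMap B.toLinearMap₁₂

lemma diagonalForm_apply (v : V) : diagonalForm B v = B v v :=
  rfl

lemma posDef_restrict_diagonalForm_iff {W : Submodule ℝ V} :
    ((diagonalForm B).restrict W).PosDef ↔ ∀ v ∈ W, v ≠ 0 → 0 < B v v := by
  simp [QuadraticMap.PosDef, diagonalForm_apply]

lemma posDef_restrict_neg_diagonalForm_iff {W : Submodule ℝ V} :
    ((-diagonalForm B).restrict W).PosDef ↔ ∀ v ∈ W, v ≠ 0 → B v v < 0 := by
  simp [QuadraticMap.PosDef, diagonalForm_apply]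

lemma radical_diagonalForm_eq_bot_iff (hB : ∀ v w, B v w = B w v) :
    (diagonalForm B).radical = ⊥ ↔ ∀ v, v ≠ 0 → B v ≠ 0 := by
  have polar_eq (v w : V) : QuadraticMap.polar (diagonalForm B) v w = 2 * B v w := by
    simp only [QuadraticMap.polar, diagonalForm_apply, map_add, add_apply, hB w v]
    ring
  simp only [QuadraticMap.radical_eq_ker_polarBilin, LinearMap.ker_eq_bot', LinearMap.ext_iff,
    QuadraticMap.polarBilin_apply_apply, polar_eq, ContinuousLinearMap.ext_iff, ne_eq,
    not_imp_not, LinearMap.zero_apply, zero_apply, mul_eq_zero, OfNat.ofNat_ne_zero, false_or]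

lemma isGreatest_negDefiniteDims_iff [FiniteDimensional ℝ V] :
    IsGreatest (negDefiniteDims V B) m ↔ sigNeg (diagonalForm B) = m := by
  have h : IsGreatest (negDefiniteDims V B) (sigNeg (diagonalForm B)) := by
    simpa only [negDefiniteDims, posDef_restrict_neg_diagonalForm_iff] using
      sigNeg_isGreatest (diagonalForm B)
  exact ⟨h.unique, fun hm => hm ▸ h⟩

lemma hasMorseIndex_iff_exists_definite_submodules [FiniteDimensional ℝ V]
    (hB : ∀ v w, B v w = B w v) :
    HasMorseIndex B m ↔ ∃ N P : Submodule ℝ V, Module.finrank ℝ N = m ∧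
      Module.finrank ℝ N + Module.finrank ℝ P = Module.finrank ℝ V ∧
      (∀ v ∈ N, v ≠ 0 → B v v < 0) ∧ ∀ v ∈ P, v ≠ 0 → 0 < B v v := by
  have sylvester := QuadraticForm.sigPos_add_sigNeg_add_radical (Q := diagonalForm B)
  rw [HasMorseIndex, ← radical_diagonalForm_eq_bot_iff hB, isGreatest_negDefiniteDims_iff,
    ← Submodule.finrank_eq_zero (R := ℝ)]
  constructor
  · rintro ⟨hrad, rfl⟩
    obtain ⟨N, hNdim, hN⟩ := exists_finrank_eq_sigNeg_and_negDef (diagonalForm B)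
    obtain ⟨P, hPdim, hP⟩ := exists_finrank_eq_sigPos_and_posDef (diagonalForm B)
    exact ⟨N, P, hNdim, by lia, posDef_restrict_neg_diagonalForm_iff.1 hN,
      posDef_restrict_diagonalForm_iff.1 hP⟩
  · rintro ⟨N, P, rfl, hdim, hN, hP⟩
    have hNdim := le_sigNeg_of_negDef _ (posDef_restrict_neg_diagonalForm_iff.2 hN)
    have hPdim := le_sigPos_of_posDef _ (posDef_restrict_diagonalForm_iff.2 hP)
    lia

lemma HasMorseIndex.congr (hBm : HasMorseIndex B m) (e : V ≃L[ℝ] V')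
    (he : ∀ v w, B' (e v) (e w) = B v w) : HasMorseIndex B' m := by
  have hdims : negDefiniteDims V' B' = negDefiniteDims V B := by
    ext d
    refine ((Submodule.orderIsoMapComap e.toLinearEquiv).toEquiv.exists_congr fun W => ?_).symm
    refine and_congr (by rw [← e.toLinearEquiv.finrank_map_eq W]; rfl) ?_
    simp [e.surjective.forall, he]
  refine ⟨e.surjective.forall.2 fun v hv hBv => hBm.1 v (by simpa using hv) ?_, hdims ▸ hBm.2⟩
  ext w
  rw [← he, hBv, zero_apply, zero_apply]

lemma HasMorseIndex.prod [FiniteDimensional ℝ V] [FiniteDimensional ℝ V']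
    (hBm : HasMorseIndex B m) (hB : ∀ v w, B v w = B w v)
    (hBm' : HasMorseIndex B' m') (hB' : ∀ v w, B' v w = B' w v)
    {C : (V × V') →L[ℝ] (V × V') →L[ℝ] ℝ} (hC : ∀ v w, C v w = B v.1 w.1 + B' v.2 w.2) :
    HasMorseIndex C (m + m') := by
  obtain ⟨N, P, rfl, hdim, hN, hP⟩ := (hasMorseIndex_iff_exists_definite_submodules hB).1 hBm
  obtain ⟨N', P', rfl, hdim', hN', hP'⟩ :=
    (hasMorseIndex_iff_exists_definite_submodules hB').1 hBm'
  refine (hasMorseIndex_iff_exists_definite_submodules fun v w => by rw [hC, hC, hB, hB']).2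
    ⟨N.prod N', P.prod P', finrank_submodule_prod N N', ?_, fun v hv hv₀ => ?_, fun v hv hv₀ => ?_⟩
  · simp only [finrank_submodule_prod, Module.finrank_prod]
    lia
  · have := forall_mem_prod_pos (q := fun v => -B v v) (q' := fun v => -B' v v) (by simp)
      (by simp) (by simpa using hN) (by simpa using hN') v hv hv₀
    rw [hC]
    linarith
  · rw [hC]
    exact forall_mem_prod_pos (q := fun v => B v v) (q' := fun v => B' v v) (by simp) (by simp)
      hP hP' v hv hv₀

lemma eventually_forall_mem_pos [FiniteDimensional ℝ V] {P : Submodule ℝ V}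
    (hP : ∀ v ∈ P, v ≠ 0 → 0 < B v v) : ∀ᶠ A in 𝓝 B, ∀ v ∈ P, v ≠ 0 → 0 < A v v := by
  have hsphere : ∀ᶠ A in 𝓝 B, ∀ v ∈ Metric.sphere (0 : P) 1, 0 < A v v := by
    refine (isCompact_sphere (0 : P) 1).eventually_forall_of_forall_eventually fun v hv => ?_
    have hcont : Continuous fun y : (V →L[ℝ] V →L[ℝ] ℝ) × P => y.1 y.2 y.2 := by fun_prop
    exact continuousAt_const.eventually_lt hcont.continuousAt
      (hP v v.2 (by simpa using ne_zero_of_mem_unit_sphere ⟨v, hv⟩))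
  filter_upwards [hsphere] with A hA v hv hv0
  have hpos : 0 < A (‖v‖⁻¹ • v) (‖v‖⁻¹ • v) :=
    hA (‖v‖⁻¹ • ⟨v, hv⟩) (by simp [norm_smul, hv0])
  simp only [map_smul, smul_apply, smul_eq_mul] at hpos
  exact pos_of_mul_pos_right (pos_of_mul_pos_right hpos (by positivity)) (by positivity)

lemma eventually_forall_mem_neg [FiniteDimensional ℝ V] {N : Submodule ℝ V}
    (hN : ∀ v ∈ N, v ≠ 0 → B v v < 0) : ∀ᶠ A in 𝓝 B, ∀ v ∈ N, v ≠ 0 → A v v < 0 := by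
  have h := eventually_forall_mem_pos (B := (-1 : ℝ) • B) (P := N) (by simpa using hN)
  simpa using (continuous_const_smul (-1 : ℝ)).continuousAt.eventually h

lemma HasMorseIndex.eventually [FiniteDimensional ℝ V] (hBm : HasMorseIndex B m)
    (hB : ∀ v w, B v w = B w v) :
    ∀ᶠ A in 𝓝 B, (∀ v w, A v w = A w v) → HasMorseIndex A m := by
  obtain ⟨N, P, hm, hdim, hN, hP⟩ := (hasMorseIndex_iff_exists_definite_submodules hB).1 hBm
  filter_upwards [eventually_forall_mem_neg hN, eventually_forall_mem_pos hP] with A hNA hPA hA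
  exact (hasMorseIndex_iff_exists_definite_submodules hA).2 ⟨N, P, hm, hdim, hNA, hPA⟩

end MorseIndex

/-- `p` is a critical point of `f` whose Hessian is nondegenerate of Morse index `m`. -/
def IsMorsePoint {E : Type*} [NormedAddCommGroup E] [NormedSpace ℝ E] (f : E → ℝ) (m : ℕ)
    (p : E) : Prop :=
  fderiv ℝ f p = 0 ∧ HasMorseIndex (fderiv ℝ (fderiv ℝ f) p) m

/-- `f` has exactly one critical point in `s`, and it is nondegenerate of Morse index `m`. -/
def HasUniqueMorsePointOn {E : Type*} [NormedAddCommGroup E] [NormedSpace ℝ E] (f : E → ℝ)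
    (m : ℕ) (s : Set E) : Prop :=
  ∃ p ∈ s, IsMorsePoint f m p ∧ ∀ q ∈ s, fderiv ℝ f q = 0 → q = p

lemma eventually_forall_mem_ball {E : Type*} [PseudoMetricSpace E] {p : E} {P : E → Prop}
    (hP : ∀ᶠ q in 𝓝 p, P q) : ∀ᶠ r in 𝓝[>] 0, ∀ q ∈ Metric.ball p r, P q := by
  have h := (tendsto_closedBall_smallSets p).eventually hP.smallSets
  filter_upwards [nhdsWithin_le_nhds h] with r hr q hq
  exact hr q (Metric.ball_subset_closedBall hq)

lemma eventually_eventually_forall_mem_ball {T E : Type*} [TopologicalSpace T]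
    [PseudoMetricSpace E] {t₀ : T} {p : E} {P : T × E → Prop} (hP : ∀ᶠ y in 𝓝 (t₀, p), P y) :
    ∀ᶠ r in 𝓝[>] 0, ∀ᶠ t in 𝓝 t₀, ∀ q ∈ Metric.ball p r, P (t, q) := by
  rw [nhds_prod_eq, eventually_prod_iff] at hP
  obtain ⟨PT, hPT, PE, hPE, hP⟩ := hP
  filter_upwards [eventually_forall_mem_ball hPE] with r hr
  filter_upwards [hPT] with t ht q hq
  exact hP ht (hr q hq)

section Perturbation

variable {T E F : Type*} [NormedAddCommGroup T] [NormedSpace ℝ T] [NormedAddCommGroup E]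
  [NormedSpace ℝ E] [NormedAddCommGroup F] [NormedSpace ℝ F] {t₀ : T} {p : E} {m : ℕ}

lemma eventually_existsUnique_mem_ball_apply_eq_zero [CompleteSpace T] [CompleteSpace E]
    [CompleteSpace F] {f : T × E → F} {f' : T × E →L[ℝ] F} (hf : HasStrictFDerivAt f f' (t₀, p))
    (hf' : (f' ∘L .inr ℝ T E).IsInvertible) (hf₀ : f (t₀, p) = 0) :
    ∀ᶠ r in 𝓝[>] 0, ∀ᶠ t in 𝓝 t₀, ∃! q, q ∈ Metric.ball p r ∧ f (t, q) = 0 := by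
  have hiff := hf.eventually_apply_eq_iff_implicitFunctionOfProdDomain hf'
  have htendsto := hf.tendsto_implicitFunctionOfProdDomain hf'
  rw [hf₀] at hiff
  filter_upwards [eventually_eventually_forall_mem_ball hiff, self_mem_nhdsWithin] with r hr hr₀
  filter_upwards [hr, htendsto.eventually (Metric.ball_mem_nhds p hr₀)] with t ht hmem
  exact ⟨_, ⟨hmem, (ht _ hmem).2 rfl⟩, fun q hq => ((ht q hq.1).1 hq.2).symm⟩

lemma isInvertible_of_forall_apply_ne_zero [FiniteDimensional ℝ E] {B : E →L[ℝ] E →L[ℝ] ℝ}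
    (hB : ∀ v, v ≠ 0 → B v ≠ 0) : B.IsInvertible := by
  have hinj : Function.Injective B :=
    (injective_iff_map_eq_zero B).2 fun v hv => by_contra fun hv₀ => hB v hv₀ hv
  have hdim : Module.finrank ℝ E = Module.finrank ℝ (E →L[ℝ] ℝ) := by
    rw [← LinearMap.toContinuousLinearMap.finrank_eq]
    exact Subspace.dual_finrank_eq.symm
  exact ⟨(LinearEquiv.ofInjectiveOfFinrankEq B.toLinearMap hinj hdim).toContinuousLinearEquiv,
    by ext; rfl⟩

lemma contDiffAt_fderiv_comp_prodMk {f : T × E → F} {n k : WithTop ℕ∞}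
    (hf : ContDiffAt ℝ n f (t₀, p)) (hkn : k + 1 ≤ n) :
    ContDiffAt ℝ k (fun y : T × E => fderiv ℝ (fun q => f (y.1, q)) y.2) (t₀, p) := by
  have hf' : ContDiffAt ℝ n (Function.uncurry fun (y : T × E) q => f (y.1, q)) ((t₀, p), p) :=
    ContDiffAt.comp (f := fun z : (T × E) × E => (z.1.1, z.2)) ((t₀, p), p) hf (by fun_prop)
  exact hf'.fderiv contDiffAt_snd hkn

lemma eventually_hasMorseIndex_fderiv_fderiv [FiniteDimensional ℝ E] {f : T × E → ℝ}
    (hf : ContDiffAt ℝ 2 f (t₀, p))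
    (hm : HasMorseIndex (fderiv ℝ (fderiv ℝ fun q => f (t₀, q)) p) m) :
    ∀ᶠ y in 𝓝 (t₀, p), HasMorseIndex (fderiv ℝ (fderiv ℝ fun q => f (y.1, q)) y.2) m := by
  have hsymm : ∀ᶠ y in 𝓝 (t₀, p), IsSymmSndFDerivAt ℝ (fun q => f (y.1, q)) y.2 := by
    filter_upwards [hf.eventually (by simp)] with y hy
    exact ContDiffAt.isSymmSndFDerivAt (n := 2) (hy.comp y.2 (by fun_prop)) (by simp)
  have hcont : ContinuousAt (fun y : T × E => fderiv ℝ (fderiv ℝ fun q => f (y.1, q)) y.2)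
      (t₀, p) :=
    (contDiffAt_fderiv_comp_prodMk (k := 0)
      (contDiffAt_fderiv_comp_prodMk (k := 1) hf (by norm_num)) (by norm_num)).continuousAt
  filter_upwards [hsymm, hcont.eventually (hm.eventually hsymm.self_of_nhds)] with y hy hym
  exact hym hy

lemma IsMorsePoint.eventually_hasUniqueMorsePointOn_ball [CompleteSpace T]
    [FiniteDimensional ℝ E] {f : T × E → ℝ} (hf : ContDiffAt ℝ 2 f (t₀, p))
    (hp : IsMorsePoint (fun q => f (t₀, q)) m p) : ∀ᶠ r in 𝓝[>] 0, ∀ᶠ t in 𝓝 t₀,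
      HasUniqueMorsePointOn (fun q => f (t, q)) m (Metric.ball p r) := by
  have := FiniteDimensional.complete ℝ E
  have hstrict := (contDiffAt_fderiv_comp_prodMk (k := 1) hf (by norm_num)).hasStrictFDerivAt
    one_ne_zero
  have hinv := isInvertible_of_forall_apply_ne_zero hp.2.1
  have hpartial := (hstrict.hasFDerivAt.comp p (hasFDerivAt_prodMk_right t₀ p)).fderiv
  filter_upwards [eventually_existsUnique_mem_ball_apply_eq_zero hstrict (hpartial ▸ hinv) hp.1,
    eventually_eventually_forall_mem_ball
      (eventually_hasMorseIndex_fderiv_fderiv hf hp.2)] with r hr hrm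
  filter_upwards [hr, hrm] with t ⟨q, ⟨hq, hq₀⟩, huniq⟩ htm
  exact ⟨q, hq, ⟨hq₀, htm q hq⟩, fun q' hq' hq₀' => huniq q' ⟨hq', hq₀'⟩⟩

end Perturbation

section Pullback

variable {E E' : Type*} [NormedAddCommGroup E] [NormedSpace ℝ E] [NormedAddCommGroup E']
  [NormedSpace ℝ E'] {m m' : ℕ}

lemma differentiableAt_fderiv_of_contDiffAt_two {f : E → ℝ} {p : E} (hf : ContDiffAt ℝ 2 f p) :
    DifferentiableAt ℝ (fderiv ℝ f) p :=
  (hf.fderiv_right (m := 1) (by norm_num)).differentiableAt one_ne_zero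

lemma fderiv_comp_clm {f : E' → ℝ} (L : E →L[ℝ] E') {p : E} (hf : DifferentiableAt ℝ f (L p)) :
    fderiv ℝ (f ∘ L) p = (fderiv ℝ f (L p)).comp L :=
  (hf.hasFDerivAt.comp p L.hasFDerivAt).fderiv

lemma fderiv_fderiv_comp_clm_apply {f : E' → ℝ} (L : E →L[ℝ] E') {p : E}
    (hf : ContDiffAt ℝ 2 f (L p)) (v w : E) :
    fderiv ℝ (fderiv ℝ (f ∘ L)) p v w = fderiv ℝ (fderiv ℝ f) (L p) (L v) (L w) := by
  have hfderiv : fderiv ℝ (f ∘ L) =ᶠ[𝓝 p] fun q => (fderiv ℝ f (L q)).comp L := by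
    filter_upwards [L.continuous.continuousAt.eventually (hf.eventually (by simp))] with q hq
    exact fderiv_comp_clm L (hq.differentiableAt two_ne_zero)
  have hcomp : HasFDerivAt (fun q => fderiv ℝ f (L q)) _ p :=
    (differentiableAt_fderiv_of_contDiffAt_two hf).hasFDerivAt.comp p L.hasFDerivAt
  rw [hfderiv.fderiv_eq, (hcomp.clm_comp (hasFDerivAt_const L p)).fderiv]
  simp

lemma IsMorsePoint.congr_of_eventuallyEq {f f' : E → ℝ} {p : E} (hf : IsMorsePoint f m p)
    (h : fderiv ℝ f' =ᶠ[𝓝 p] fderiv ℝ f) : IsMorsePoint f' m p := by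
  rwa [IsMorsePoint, h.eq_of_nhds, h.fderiv_eq]

lemma fderiv_comp_continuousLinearEquiv_eq_zero_iff {f : E' → ℝ} (e : E ≃L[ℝ] E') {p : E} :
    fderiv ℝ (f ∘ e) p = 0 ↔ fderiv ℝ f (e p) = 0 := by
  rw [e.comp_right_fderiv]
  refine ⟨fun h => ?_, fun h => by rw [h, ContinuousLinearMap.zero_comp]⟩
  ext w
  simpa using congr($h (e.symm w))

lemma IsMorsePoint.of_comp_continuousLinearEquiv {f : E' → ℝ} (e : E ≃L[ℝ] E') {p : E}
    (hf : ContDiffAt ℝ 2 f (e p)) (hp : IsMorsePoint (f ∘ e) m p) : IsMorsePoint f m (e p) :=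
  ⟨(fderiv_comp_continuousLinearEquiv_eq_zero_iff e).1 hp.1, hp.2.congr e fun v w =>
    (fderiv_fderiv_comp_clm_apply (e : E →L[ℝ] E') hf v w).symm⟩

lemma IsMorsePoint.add_prod [FiniteDimensional ℝ E] [FiniteDimensional ℝ E'] {f : E → ℝ}
    {f' : E' → ℝ} {p : E} {p' : E'} (hf : ContDiffAt ℝ 2 f p) (hf' : ContDiffAt ℝ 2 f' p')
    (hp : IsMorsePoint f m p) (hp' : IsMorsePoint f' m' p') :
    IsMorsePoint (fun q : E × E' => f q.1 + f' q.2) (m + m') (p, p') := by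
  have hfst : ContDiffAt ℝ 2 (f ∘ ContinuousLinearMap.fst ℝ E E') (p, p') :=
    hf.comp _ (by fun_prop)
  have hsnd : ContDiffAt ℝ 2 (f' ∘ ContinuousLinearMap.snd ℝ E E') (p, p') :=
    hf'.comp _ (by fun_prop)
  have hadd : fderiv ℝ (fun q : E × E' => f q.1 + f' q.2) =ᶠ[𝓝 (p, p')]
      fderiv ℝ (f ∘ ContinuousLinearMap.fst ℝ E E') +
        fderiv ℝ (f' ∘ ContinuousLinearMap.snd ℝ E E') := by
    filter_upwards [hfst.eventually (by simp), hsnd.eventually (by simp)] with q hq hq'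
    exact fderiv_add (hq.differentiableAt two_ne_zero) (hq'.differentiableAt two_ne_zero)
  constructor
  · rw [hadd.eq_of_nhds, Pi.add_apply, fderiv_comp_clm _ (hf.differentiableAt two_ne_zero),
      fderiv_comp_clm _ (hf'.differentiableAt two_ne_zero)]
    simp [hp.1, hp'.1]
  · refine hp.2.prod (hf.isSymmSndFDerivAt (by simp)) hp'.2 (hf'.isSymmSndFDerivAt (by simp))
      fun v w => ?_
    rw [hadd.fderiv_eq, fderiv_add (differentiableAt_fderiv_of_contDiffAt_two hfst)
      (differentiableAt_fderiv_of_contDiffAt_two hsnd), add_apply, add_apply,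
      fderiv_fderiv_comp_clm_apply _ hf, fderiv_fderiv_comp_clm_apply _ hf']
    rfl

end Pullback

section LogNormSq

open Complex

lemma contDiffAt_log_normSq {w : ℂ} (hw : w ≠ 0) {n : WithTop ℕ∞} :
    ContDiffAt ℝ n (fun z => Real.log (normSq z)) w := by
  simp only [normSq_eq_norm_sq]
  exact (contDiff_norm_sq ℝ).contDiffAt.log (by simpa using hw)

lemma hasFDerivAt_log_normSq {w : ℂ} (hw : w ≠ 0) :
    HasFDerivAt (fun z => Real.log (normSq z))
      ((2 : ℝ) • reCLM.comp (ContinuousLinearMap.mul ℝ ℂ w⁻¹)) w := by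
  have h := (hasStrictFDerivAt_norm_sq w).hasFDerivAt.log (by simpa using hw)
  simp only [← normSq_eq_norm_sq] at h
  convert! h using 1
  ext
  all_goals
    simp only [smul_apply, ContinuousLinearMap.comp_apply, ContinuousLinearMap.mul_apply',
      reCLM_apply, mul_re, inv_re, inv_im, smul_eq_mul, coe_innerSL_apply, Complex.inner, conj_re,
      conj_im, nsmul_eq_mul, Nat.cast_ofNat]
    ring

lemma hasFDerivAt_log_normSq_mul_add {c : ℂ} {ζ : ℂ × ℂ} (hζ : ζ.1 * ζ.2 + c ≠ 0) :
    HasFDerivAt (fun η : ℂ × ℂ => Real.log (normSq (η.1 * η.2 + c)))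
      ((2 : ℝ) • reCLM.comp ((ζ.1 * ζ.2 + c)⁻¹ •
        (ζ.1 • ContinuousLinearMap.snd ℝ ℂ ℂ + ζ.2 • ContinuousLinearMap.fst ℝ ℂ ℂ))) ζ := by
  have hmul := ((hasFDerivAt_fst (𝕜 := ℝ) (p := ζ)).mul hasFDerivAt_snd).add_const c
  convert! (hasFDerivAt_log_normSq hζ).comp ζ hmul using 1

lemma hasMorseIndex_of_apply_eq_neg_two_mul_re {B : ℂ × ℂ →L[ℝ] ℂ × ℂ →L[ℝ] ℝ}
    (hB : ∀ u v, B u v = -(2 * (u.1 * v.2 + u.2 * v.1).re)) : HasMorseIndex B 2 := by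
  refine (hasMorseIndex_iff_exists_definite_submodules fun u v => ?_).2
    ⟨conjCLE.toLinearMap.graph, (-conjCLE.toLinearMap).graph,
      by simp only [finrank_graph, finrank_real_complex],
      by simp only [finrank_graph, Module.finrank_prod], ?_, ?_⟩
  · rw [hB, hB, mul_comm u.1, mul_comm u.2, add_comm]
  · rintro ⟨u, v⟩ huv hne
    obtain rfl : v = conjCLE u := huv
    have hu : 0 < normSq u := normSq_pos.2 fun h => hne (by simp [h])
    have hB_conj : B (u, conjCLE u) (u, conjCLE u) = -(4 * normSq u) := by
      simp only [hB, ContinuousAlgEquiv.coeCLE_apply, conjCAE_apply, add_re, mul_re, conj_re,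
        conj_im, normSq_apply]
      ring
    linarith
  · rintro ⟨u, v⟩ huv hne
    obtain rfl : v = -conjCLE u := huv
    have hu : 0 < normSq u := normSq_pos.2 fun h => hne (by simp [h])
    have hB_neg_conj : B (u, -conjCLE u) (u, -conjCLE u) = 4 * normSq u := by
      simp only [hB, ContinuousAlgEquiv.coeCLE_apply, conjCAE_apply, add_re, mul_re, neg_re,
        neg_im, conj_re, conj_im, normSq_apply]
      ring
    linarith

lemma isMorsePoint_neg_log_normSq_mul_add_one :
    IsMorsePoint (fun ζ : ℂ × ℂ => -Real.log (normSq (ζ.1 * ζ.2 + 1))) 2 0 := by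
  let ℓ : ℂ × ℂ →L[ℝ] ℂ × ℂ →L[ℝ] ℂ :=
    (ContinuousLinearMap.fst ℝ ℂ ℂ).smulRight (ContinuousLinearMap.snd ℝ ℂ ℂ) +
      (ContinuousLinearMap.snd ℝ ℂ ℂ).smulRight (ContinuousLinearMap.fst ℝ ℂ ℂ)
  let ρ := ContinuousLinearMap.compL ℝ (ℂ × ℂ) ℂ ℝ ((-2 : ℝ) • reCLM)
  have hℓ (u v : ℂ × ℂ) : ℓ u v = u.1 * v.2 + u.2 * v.1 := rfl
  have hρ (L : ℂ × ℂ →L[ℝ] ℂ) (v : ℂ × ℂ) : ρ L v = -(2 * (L v).re) := neg_mul _ _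
  have hfderiv : fderiv ℝ (fun ζ : ℂ × ℂ => -Real.log (normSq (ζ.1 * ζ.2 + 1))) =ᶠ[𝓝 0]
      fun ζ => ρ ((ζ.1 * ζ.2 + 1)⁻¹ • ℓ ζ) := by
    have hne : ∀ᶠ ζ : ℂ × ℂ in 𝓝 0, ζ.1 * ζ.2 + 1 ≠ 0 :=
      ContinuousAt.eventually_ne (by fun_prop) (by simp)
    filter_upwards [hne] with ζ hζ
    convert! (hasFDerivAt_log_normSq_mul_add hζ).neg.fderiv using 1
    ext <;> simp [hρ, hℓ]
  have hinv : DifferentiableAt ℝ (fun ζ : ℂ × ℂ => (ζ.1 * ζ.2 + 1)⁻¹) 0 :=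
    DifferentiableAt.inv (by fun_prop) (by simp)
  have hhess : HasFDerivAt (fun ζ : ℂ × ℂ => ρ ((ζ.1 * ζ.2 + 1)⁻¹ • ℓ ζ)) _ 0 :=
    ρ.hasFDerivAt.comp (0 : ℂ × ℂ) (hinv.hasFDerivAt.smul ℓ.hasFDerivAt)
  refine ⟨by simp [hfderiv.eq_of_nhds], hasMorseIndex_of_apply_eq_neg_two_mul_re fun u v => ?_⟩
  rw [hfderiv.fderiv_eq, hhess.fderiv, ContinuousLinearMap.comp_apply, hρ]
  simp [hℓ]

end LogNormSq

lemma norm_le_of_two_mul_norm_le {R : Type*} [NonUnitalSeminormedRing R] {M r : ℝ} {z w c : R}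
    (hMr : M * r ≤ 1) (hM : 0 ≤ M) (hw : ‖w‖ ≤ r) (hz : 2 * ‖z‖ ≤ M * ‖w * z + c‖) :
    ‖z‖ ≤ M * ‖c‖ := by
  have h : M * ‖w * z + c‖ ≤ ‖z‖ + M * ‖c‖ := by
    calc
      M * ‖w * z + c‖ ≤ M * (‖w‖ * ‖z‖ + ‖c‖) := by
        gcongr
        exact (norm_add_le _ _).trans (by grw [norm_mul_le])
      _ ≤ M * (r * ‖z‖ + ‖c‖) := by gcongr
      _ = M * r * ‖z‖ + M * ‖c‖ := by ring
      _ ≤ ‖z‖ + M * ‖c‖ := by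
        gcongr
        exact mul_le_of_le_one_left (norm_nonneg z) hMr
  linarith

lemma mul_add_one_ne_zero_of_norm_lt {R : Type*} [NormedRing R] [NormOneClass R] {a b : R}
    (ha : ‖a‖ < 1) (hb : ‖b‖ < 1) : a * b + 1 ≠ 0 := by
  intro h
  have hab : ‖a * b‖ = 1 := by rw [eq_neg_of_add_eq_zero_left h, norm_neg, norm_one]
  have hlt : ‖a‖ * ‖b‖ < 1 := mul_lt_one_of_nonneg_of_lt_one_left (norm_nonneg a) ha hb.le
  exact ((norm_mul_le a b).trans_lt hlt).ne hab

lemma mem_ball_zero_zero_prodMk_iff {E F Y : Type*} [SeminormedAddCommGroup E]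
    [SeminormedAddCommGroup F] [PseudoMetricSpace Y] {y : Y} {r : ℝ} {q : E × F × Y} :
    q ∈ Metric.ball (0, 0, y) r ↔ ‖q.1‖ < r ∧ ‖q.2.1‖ < r ∧ dist q.2.2 y < r := by
  simp only [Metric.mem_ball, Prod.dist_eq, dist_zero_right, max_lt_iff]

lemma mem_ball_zero_prodMk_iff {E F Y : Type*} [SeminormedAddCommGroup E]
    [SeminormedAddCommGroup F] [PseudoMetricSpace Y] {y : Y} {r : ℝ} {q : (E × F) × Y} :
    q ∈ Metric.ball (0, y) r ↔ ‖q.1.1‖ < r ∧ ‖q.1.2‖ < r ∧ dist q.2 y < r := by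
  simp only [Metric.mem_ball, Prod.dist_eq, dist_zero_right, max_lt_iff, Prod.norm_def, and_assoc]

section LogDeformation

open Complex

variable {X : Type*} [NormedAddCommGroup X] [NormedSpace ℝ X] {g : ℂ × ℂ × X → ℝ} {ε : ℂ}
  {x₀ : X} {m : ℕ}

/-- The function `φ_ε = g - log |z₀ z₁ + ε|²`; since `Real.log 0 = 0`, it equals `g` on the
polar locus `z₀ z₁ + ε = 0`. -/
noncomputable def logDeformation (g : ℂ × ℂ × X → ℝ) (ε : ℂ) (p : ℂ × ℂ × X) : ℝ :=
  g p - Real.log (normSq (p.1 * p.2.1 + ε))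

lemma contDiffAt_logDeformation {n : WithTop ℕ∞} {q : ℂ × ℂ × X} (hg : ContDiffAt ℝ n g q)
    (hq : q.1 * q.2.1 + ε ≠ 0) : ContDiffAt ℝ n (logDeformation g ε) q :=
  hg.sub ((contDiffAt_log_normSq hq).comp (f := fun p : ℂ × ℂ × X => p.1 * p.2.1 + ε) q
    (by fun_prop))

lemma fderiv_logDeformation_apply {q : ℂ × ℂ × X} (hg : DifferentiableAt ℝ g q)
    (hq : q.1 * q.2.1 + ε ≠ 0) (v : ℂ × ℂ × X) :
    fderiv ℝ (logDeformation g ε) q v =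
      fderiv ℝ g q v - 2 * ((q.1 * q.2.1 + ε)⁻¹ * (q.1 * v.2.1 + q.2.1 * v.1)).re := by
  have hlog := HasFDerivAt.comp (f := fun p : ℂ × ℂ × X => (p.1, p.2.1)) q
    (hasFDerivAt_log_normSq_mul_add hq) (hasFDerivAt_fst.prodMk hasFDerivAt_snd.fst)
  have hφ : HasFDerivAt (logDeformation g ε) _ q := hg.hasFDerivAt.sub hlog
  rw [hφ.fderiv]
  rfl

lemma norm_le_of_forall_re_mul_le {c : ℂ} {M : ℝ} (hM : ∀ a, (c * a).re ≤ M * ‖a‖) :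
    ‖c‖ ≤ M := by
  have h := hM (starRingEnd ℂ c)
  rw [mul_conj, ofReal_re, normSq_eq_norm_sq, RCLike.norm_conj, sq] at h
  rcases (norm_nonneg c).eq_or_lt with hc | hc
  · simpa [norm_eq_zero.1 hc.symm] using hM 1
  · exact le_of_mul_le_mul_right h hc

lemma two_mul_norm_le_of_fderiv_logDeformation_eq_zero {q : ℂ × ℂ × X}
    (hg : DifferentiableAt ℝ g q) (hq : q.1 * q.2.1 + ε ≠ 0)
    (hcrit : fderiv ℝ (logDeformation g ε) q = 0) :
    2 * ‖q.1‖ ≤ ‖fderiv ℝ g q‖ * ‖q.1 * q.2.1 + ε‖ ∧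
      2 * ‖q.2.1‖ ≤ ‖fderiv ℝ g q‖ * ‖q.1 * q.2.1 + ε‖ := by
  set w := q.1 * q.2.1 + ε
  have hD (a b : ℂ) : (2 * w⁻¹ * (q.1 * b + q.2.1 * a)).re = fderiv ℝ g q (a, b, 0) := by
    have h := fderiv_logDeformation_apply hg hq (a, b, 0)
    rw [hcrit, zero_apply] at h
    rw [mul_assoc, two_mul, add_re]
    linarith
  have hbound (v : ℂ × ℂ × X) : fderiv ℝ g q v ≤ ‖fderiv ℝ g q‖ * ‖v‖ :=
    (le_abs_self _).trans ((fderiv ℝ g q).le_opNorm v)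
  have hw : 0 < ‖w‖ := norm_pos_iff.2 hq
  have hdiv (z : ℂ) (hz : ‖2 * w⁻¹ * z‖ ≤ ‖fderiv ℝ g q‖) : 2 * ‖z‖ ≤ ‖fderiv ℝ g q‖ * ‖w‖ := by
    rw [← div_le_iff₀ hw]
    convert! hz using 1
    simp only [norm_mul, norm_inv, RCLike.norm_ofNat]
    ring
  constructor <;> refine hdiv _ (norm_le_of_forall_re_mul_le fun a => ?_)
  · simpa [mul_assoc] using (hD 0 a).trans_le (hbound _)
  · simpa [mul_assoc] using (hD a 0).trans_le (hbound _)

lemma norm_le_of_fderiv_logDeformation_eq_zero {M r : ℝ} {q : ℂ × ℂ × X}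
    (hg : DifferentiableAt ℝ g q) (hM : ‖fderiv ℝ g q‖ ≤ M) (hMr : M * r ≤ 1)
    (hq₁ : ‖q.1‖ ≤ r) (hq₂ : ‖q.2.1‖ ≤ r) (hq : q.1 * q.2.1 + ε ≠ 0)
    (hcrit : fderiv ℝ (logDeformation g ε) q = 0) : ‖q.1‖ ≤ M * ‖ε‖ ∧ ‖q.2.1‖ ≤ M * ‖ε‖ := by
  have hM₀ : 0 ≤ M := (norm_nonneg _).trans hM
  obtain ⟨h₁, h₂⟩ := two_mul_norm_le_of_fderiv_logDeformation_eq_zero hg hq hcrit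
  constructor
  · refine norm_le_of_two_mul_norm_le hMr hM₀ hq₂ (h₁.trans ?_)
    rw [mul_comm q.2.1]
    gcongr
  · refine norm_le_of_two_mul_norm_le hMr hM₀ hq₁ (h₂.trans ?_)
    gcongr

/-- The rescaling `zᵢ = t ζᵢ` of the complex coordinates. The `ζᵢ` are grouped because the rescaled
function becomes, at `t = 0`, a sum over the two factors of `(ℂ × ℂ) × X`. -/
noncomputable def scaling (X : Type*) [NormedAddCommGroup X] [NormedSpace ℝ X] (t : ℂˣ) :
    ((ℂ × ℂ) × X) ≃L[ℝ] ℂ × ℂ × X :=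
  ((ContinuousLinearEquiv.smulLeft t).prodCongr (.refl ℝ X)).trans (.prodAssoc ℝ ℂ ℂ X)

lemma scaling_apply (t : ℂˣ) (q : (ℂ × ℂ) × X) :
    scaling X t q = (t * q.1.1, t * q.1.2, q.2) :=
  rfl

lemma scaling_fst_mul_snd_fst_add_sq (t : ℂˣ) (q : (ℂ × ℂ) × X) :
    (scaling X t q).1 * (scaling X t q).2.1 + (t : ℂ) ^ 2 = t ^ 2 * (q.1.1 * q.1.2 + 1) := by
  simp only [scaling_apply]
  ring

/-- The function `φ_{t²}` in the coordinates `scaling X t`, up to the constant `log |t²|²`. Unlike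
`φ_{t²}` itself, it is regular near the origin also for `t = 0`. -/
noncomputable def rescaledDeformation (g : ℂ × ℂ × X → ℝ) (t : ℂ) (q : (ℂ × ℂ) × X) : ℝ :=
  g (t * q.1.1, t * q.1.2, q.2) - Real.log (normSq (q.1.1 * q.1.2 + 1))

lemma contDiffAt_rescaledDeformation {n : WithTop ℕ∞} (hg : ContDiffAt ℝ n g (0, 0, x₀)) :
    ContDiffAt ℝ n (fun y : ℂ × (ℂ × ℂ) × X => rescaledDeformation g y.1 y.2) (0, 0, x₀) := by
  refine ContDiffAt.sub ?_ ?_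
  · exact ContDiffAt.comp (f := fun y : ℂ × (ℂ × ℂ) × X => (y.1 * y.2.1.1, y.1 * y.2.1.2, y.2.2))
      _ (by simpa using hg) (by fun_prop)
  · exact (contDiffAt_log_normSq (by simp)).comp
      (f := fun y : ℂ × (ℂ × ℂ) × X => y.2.1.1 * y.2.1.2 + 1) _ (by fun_prop)

lemma isMorsePoint_rescaledDeformation_zero [FiniteDimensional ℝ X]
    (hg : ContDiffAt ℝ 2 g (0, 0, x₀)) (hm : IsMorsePoint (fun x => g (0, 0, x)) m x₀) :
    IsMorsePoint (rescaledDeformation g 0) (m + 2) (0, x₀) := by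
  have hlog : ContDiffAt ℝ 2 (fun ζ : ℂ × ℂ => -Real.log (normSq (ζ.1 * ζ.2 + 1))) 0 :=
    ((contDiffAt_log_normSq (by simp)).comp (f := fun ζ : ℂ × ℂ => ζ.1 * ζ.2 + 1) _
      (by fun_prop)).neg
  have hgX : ContDiffAt ℝ 2 (fun x => g (0, 0, x)) x₀ := hg.comp x₀ (by fun_prop)
  convert! isMorsePoint_neg_log_normSq_mul_add_one.add_prod hlog hgX hm using 1
  · funext q
    simp only [rescaledDeformation, zero_mul]
    ring
  · exact add_comm m 2

lemma fderiv_logDeformation_comp_scaling {t : ℂˣ} {q : (ℂ × ℂ) × X} (hq : q.1.1 * q.1.2 + 1 ≠ 0) :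
    fderiv ℝ (logDeformation g (t ^ 2) ∘ scaling X t) q =
      fderiv ℝ (rescaledDeformation g t) q := by
  have hconst : logDeformation g (t ^ 2) ∘ scaling X t =ᶠ[𝓝 q]
      fun q => rescaledDeformation g t q - Real.log (normSq ((t : ℂ) ^ 2)) := by
    have hne : ∀ᶠ q' : (ℂ × ℂ) × X in 𝓝 q, q'.1.1 * q'.1.2 + 1 ≠ 0 :=
      ContinuousAt.eventually_ne (by fun_prop) hq
    filter_upwards [hne] with q' hq'
    rw [Function.comp_apply, logDeformation, scaling_fst_mul_snd_fst_add_sq, map_mul,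
      Real.log_mul (by simp) (by simpa using hq'), scaling_apply, rescaledDeformation]
    ring
  rw [hconst.fderiv_eq, fderiv_sub_const]

lemma fderiv_logDeformation_scaling_eq_zero_iff {t : ℂˣ} {q : (ℂ × ℂ) × X}
    (hq : q.1.1 * q.1.2 + 1 ≠ 0) :
    fderiv ℝ (logDeformation g (t ^ 2)) (scaling X t q) = 0 ↔
      fderiv ℝ (rescaledDeformation g t) q = 0 := by
  rw [← fderiv_logDeformation_comp_scaling hq, fderiv_comp_continuousLinearEquiv_eq_zero_iff]

lemma IsMorsePoint.logDeformation_scaling {t : ℂˣ} {q : (ℂ × ℂ) × X}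
    (hg : ContDiffAt ℝ 2 g (scaling X t q)) (hq : q.1.1 * q.1.2 + 1 ≠ 0)
    (hm : IsMorsePoint (rescaledDeformation g t) m q) :
    IsMorsePoint (logDeformation g (t ^ 2)) m (scaling X t q) := by
  have hne : ∀ᶠ q' : (ℂ × ℂ) × X in 𝓝 q, q'.1.1 * q'.1.2 + 1 ≠ 0 :=
    ContinuousAt.eventually_ne (by fun_prop) hq
  refine IsMorsePoint.of_comp_continuousLinearEquiv _ (contDiffAt_logDeformation hg ?_)
    (hm.congr_of_eventuallyEq (hne.mono fun q' hq' => fderiv_logDeformation_comp_scaling hq'))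
  rw [scaling_fst_mul_snd_fst_add_sq]
  exact mul_ne_zero (by simp) hq

lemma scaling_mem_ball {r : ℝ} {t : ℂˣ} {ζ : (ℂ × ℂ) × X} (ht : ‖(t : ℂ)‖ ≤ 1)
    (hζ : ζ ∈ Metric.ball (0, x₀) r) : scaling X t ζ ∈ Metric.ball (0, 0, x₀) r := by
  have hle (z : ℂ) : ‖(t : ℂ) * z‖ ≤ ‖z‖ := by
    rw [norm_mul]
    exact mul_le_of_le_one_left (norm_nonneg z) ht
  obtain ⟨h₁, h₂, h₃⟩ := mem_ball_zero_prodMk_iff.1 hζ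
  exact mem_ball_zero_zero_prodMk_iff.2 ⟨(hle _).trans_lt h₁, (hle _).trans_lt h₂, h₃⟩

lemma mem_ball_of_fderiv_logDeformation_scaling_eq_zero {M r : ℝ} {t : ℂˣ} {ζ : (ℂ × ℂ) × X}
    (hg : DifferentiableAt ℝ g (scaling X t ζ)) (hM : ‖fderiv ℝ g (scaling X t ζ)‖ ≤ M)
    (hMr : M * r ≤ 1) (hMt : M * ‖(t : ℂ)‖ < r) (hmem : scaling X t ζ ∈ Metric.ball (0, 0, x₀) r)
    (hne : (scaling X t ζ).1 * (scaling X t ζ).2.1 + (t : ℂ) ^ 2 ≠ 0)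
    (hcrit : fderiv ℝ (logDeformation g (t ^ 2)) (scaling X t ζ) = 0) :
    ζ ∈ Metric.ball (0, x₀) r := by
  have hlt (z : ℂ) (hz : ‖(t : ℂ) * z‖ ≤ M * ‖(t : ℂ) ^ 2‖) : ‖z‖ < r := by
    rw [norm_mul, norm_pow, sq, ← mul_assoc, mul_comm] at hz
    exact (le_of_mul_le_mul_right hz (norm_pos_iff.2 t.ne_zero)).trans_lt hMt
  obtain ⟨h₁, h₂, h₃⟩ := mem_ball_zero_zero_prodMk_iff.1 hmem
  obtain ⟨hζ₁, hζ₂⟩ := norm_le_of_fderiv_logDeformation_eq_zero hg hM hMr h₁.le h₂.le hne hcrit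
  exact mem_ball_zero_prodMk_iff.2 ⟨hlt _ hζ₁, hlt _ hζ₂, h₃⟩

lemma HasUniqueMorsePointOn.logDeformation_sq {M r : ℝ} {t : ℂˣ}
    (hg : ∀ q ∈ Metric.ball (0, 0, x₀) r, ContDiffAt ℝ 2 g q ∧ ‖fderiv ℝ g q‖ ≤ M)
    (hr : r ≤ 1) (hMr : M * r ≤ 1) (ht : ‖(t : ℂ)‖ ≤ 1) (hMt : M * ‖(t : ℂ)‖ < r)
    (h : HasUniqueMorsePointOn (rescaledDeformation g t) m (Metric.ball (0, x₀) r)) :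
    HasUniqueMorsePointOn (logDeformation g (t ^ 2)) m
      {q ∈ Metric.ball (0, 0, x₀) r | q.1 * q.2.1 + (t : ℂ) ^ 2 ≠ 0} := by
  have hregular {η : (ℂ × ℂ) × X} (hη : η ∈ Metric.ball (0, x₀) r) : η.1.1 * η.1.2 + 1 ≠ 0 := by
    obtain ⟨h₁, h₂, -⟩ := mem_ball_zero_prodMk_iff.1 hη
    exact mul_add_one_ne_zero_of_norm_lt (h₁.trans_le hr) (h₂.trans_le hr)
  obtain ⟨ζ, hζ, hmorse, huniq⟩ := h
  have hmem := scaling_mem_ball ht hζ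
  refine ⟨scaling X t ζ, ⟨hmem, ?_⟩, hmorse.logDeformation_scaling (hg _ hmem).1 (hregular hζ), ?_⟩
  · rw [scaling_fst_mul_snd_fst_add_sq]
    exact mul_ne_zero (by simp) (hregular hζ)
  · refine (scaling X t).surjective.forall.2 fun η ⟨hq, hne⟩ hcrit => congr_arg _ ?_
    obtain ⟨hgη, hM⟩ := hg _ hq
    have hη := mem_ball_of_fderiv_logDeformation_scaling_eq_zero
      (hgη.differentiableAt two_ne_zero) hM hMr hMt hq hne hcrit
    exact huniq η hη ((fderiv_logDeformation_scaling_eq_zero_iff (hregular hη)).1 hcrit)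

lemma eventually_hasUniqueMorsePointOn_logDeformation_sq [FiniteDimensional ℝ X]
    (hg : ContDiffAt ℝ 2 g (0, 0, x₀)) (hx₀ : IsMorsePoint (fun x => g (0, 0, x)) m x₀) :
    ∀ᶠ r in 𝓝[>] 0, ∀ᶠ t : ℂ in 𝓝 0, t ≠ 0 →
      HasUniqueMorsePointOn (logDeformation g (t ^ 2)) (m + 2)
        {q ∈ Metric.ball (0, 0, x₀) r | q.1 * q.2.1 + t ^ 2 ≠ 0} := by
  obtain ⟨M, hM⟩ := exists_gt ‖fderiv ℝ g (0, 0, x₀)‖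
  have hgM : ∀ᶠ q in 𝓝 (0, 0, x₀), ContDiffAt ℝ 2 g q ∧ ‖fderiv ℝ g q‖ ≤ M :=
    (hg.eventually (by simp)).and
      ((hg.continuousAt_fderiv two_ne_zero).norm.tendsto.eventually_le_const hM)
  have hMr : ∀ᶠ r in 𝓝[>] (0 : ℝ), M * r ≤ 1 :=
    nhdsWithin_le_nhds <| Tendsto.eventually_le_const one_pos <|
      Continuous.tendsto' (by fun_prop) 0 0 (mul_zero M)
  filter_upwards [Ioc_mem_nhdsGT one_pos, hMr, eventually_forall_mem_ball hgM,
    (isMorsePoint_rescaledDeformation_zero hg hx₀).eventually_hasUniqueMorsePointOn_ball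
      (contDiffAt_rescaledDeformation hg)] with r ⟨hr₀, hr⟩ hMr hgr hstable
  have ht : ∀ᶠ t : ℂ in 𝓝 0, ‖t‖ ≤ 1 :=
    Tendsto.eventually_le_const one_pos tendsto_norm_zero
  have hMt : ∀ᶠ t : ℂ in 𝓝 0, M * ‖t‖ < r :=
    Tendsto.eventually_lt_const hr₀ (Continuous.tendsto' (by fun_prop) 0 0 (by simp))
  filter_upwards [hstable, ht, hMt] with t htr ht hMt ht₀
  lift t to ℂˣ using ht₀.isUnit
  exact htr.logDeformation_sq hgr hr hMr ht hMt

theorem critical_point_index_shift_general [FiniteDimensional ℝ X]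
    (hg : ContDiffAt ℝ 2 g (0, 0, x₀)) (hx₀ : IsMorsePoint (fun x => g (0, 0, x)) m x₀) :
    ∃ ε₁ > 0, ∃ U : Set (ℂ × ℂ × X), IsOpen U ∧ (0, 0, x₀) ∈ U ∧
      ∀ ε : ℂ, ε ≠ 0 → ‖ε‖ < ε₁ →
        HasUniqueMorsePointOn (logDeformation g ε) (m + 2) {q ∈ U | q.1 * q.2.1 + ε ≠ 0} := by
  obtain ⟨r, hr, hr₀⟩ :=
    (eventually_hasUniqueMorsePointOn_logDeformation_sq hg hx₀).and self_mem_nhdsWithin |>.exists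
  obtain ⟨τ, hτ, hball⟩ := Metric.eventually_nhds_iff_ball.1 hr
  refine ⟨τ ^ 2, by positivity, Metric.ball (0, 0, x₀) r, Metric.isOpen_ball,
    Metric.mem_ball_self hr₀, fun ε hε hετ => ?_⟩
  obtain ⟨t, rfl⟩ := IsAlgClosed.exists_pow_nat_eq ε two_pos
  rw [norm_pow, sq_lt_sq₀ (norm_nonneg t) hτ.le] at hετ
  exact hball t (mem_ball_zero_iff.2 hετ) ((pow_ne_zero_iff two_ne_zero).1 hε)

end LogDeformation

/-- Index formula of Theorem 1 in the local model: the unique critical point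
`p_ε` of `φ_ε = g - log|z₀z₁ + ε|²` near a nondegenerate critical point `x₀` of
`x ↦ g(0,0,x)` of Morse index `m` is nondegenerate of Morse index `m + 2`. -/
theorem critical_point_index_shift
    (k : ℕ) (g : ℂ × ℂ × EuclideanSpace ℝ (Fin k) → ℝ) (hg : ContDiff ℝ (⊤ : ℕ∞) g)
    (x₀ : EuclideanSpace ℝ (Fin k)) (m : ℕ)
    (hcrit : fderiv ℝ (fun y : EuclideanSpace ℝ (Fin k) => g ((0 : ℂ), (0 : ℂ), y)) x₀ = 0)
    (hnd : ∀ v : EuclideanSpace ℝ (Fin k), v ≠ 0 →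
      fderiv ℝ (fderiv ℝ (fun y : EuclideanSpace ℝ (Fin k) => g ((0 : ℂ), (0 : ℂ), y))) x₀ v ≠ 0)
    (hm : IsGreatest (negDefiniteDims (EuclideanSpace ℝ (Fin k))
      (fderiv ℝ (fderiv ℝ (fun y : EuclideanSpace ℝ (Fin k) => g ((0 : ℂ), (0 : ℂ), y))) x₀)) m) :
    ∃ ε₁ > (0 : ℝ), ∃ U : Set (ℂ × ℂ × EuclideanSpace ℝ (Fin k)), IsOpen U ∧
      ((0 : ℂ), (0 : ℂ), x₀) ∈ U ∧
      ∀ ε : ℝ, 0 < ε → ε < ε₁ →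
        ∃ pε : ℂ × ℂ × EuclideanSpace ℝ (Fin k),
          pε ∈ U ∧ pε.1 * pε.2.1 + (ε : ℂ) ≠ 0 ∧
          fderiv ℝ (fun p : ℂ × ℂ × EuclideanSpace ℝ (Fin k) =>
            g p - Real.log (Complex.normSq (p.1 * p.2.1 + (ε : ℂ)))) pε = 0 ∧
          (∀ q ∈ U, q.1 * q.2.1 + (ε : ℂ) ≠ 0 →
            fderiv ℝ (fun p : ℂ × ℂ × EuclideanSpace ℝ (Fin k) =>
              g p - Real.log (Complex.normSq (p.1 * p.2.1 + (ε : ℂ)))) q = 0 →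
            q = pε) ∧
          (∀ v : ℂ × ℂ × EuclideanSpace ℝ (Fin k), v ≠ 0 →
            fderiv ℝ (fderiv ℝ (fun p : ℂ × ℂ × EuclideanSpace ℝ (Fin k) =>
              g p - Real.log (Complex.normSq (p.1 * p.2.1 + (ε : ℂ))))) pε v ≠ 0) ∧
          IsGreatest (negDefiniteDims (ℂ × ℂ × EuclideanSpace ℝ (Fin k))
            (fderiv ℝ (fderiv ℝ (fun p : ℂ × ℂ × EuclideanSpace ℝ (Fin k) =>
              g p - Real.log (Complex.normSq (p.1 * p.2.1 + (ε : ℂ))))) pε)) (m + 2) := by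
  obtain ⟨ε₁, hε₁, U, hU, hpU, h⟩ :=
    critical_point_index_shift_general (hg.of_le (by norm_cast)).contDiffAt ⟨hcrit, hnd, hm⟩
  refine ⟨ε₁, hε₁, U, hU, hpU, fun ε hε hεlt => ?_⟩
  obtain ⟨p, ⟨hp, hne⟩, ⟨hp₀, hp_nd, hp_index⟩, huniq⟩ :=
    h ε (by exact_mod_cast hε.ne') (by simpa [abs_of_pos hε] using hεlt)
  exact ⟨p, hp, hne, hp₀, fun q hq hq_ne => huniq q ⟨hq, hq_ne⟩, hp_nd, hp_index⟩
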